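/- If β ≥ γ ≥ 0 and β + γ > 1, then for all real k₁, k₂, the integral ∫_ℝ ⟨τ−k₁⟩^{−β} ⟨τ−k₂⟩^{−γ} dτ is bounded by a constant (depending only on β, γ) times ⟨k₁−k₂⟩^{−γ} φ_β(k₁−k₂), where φ_β(k) = 1 if β > 1, φ_β(k) = log(1+⟨k⟩) if β = 1, and φ_β(k) = ⟨k⟩^{1−β} if β < 1. -/

import Mathlib

open MeasureTheory Real

noncomputable def jb (x : ℝ) : ℝ := Real.sqrt (1 + x ^ 2)

noncomputable def phi (β k : ℝ) : ℝ :=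
  if 1 < β then 1 else if β = 1 then Real.log (1 + jb k) else (jb k) ^ (1 - β)

lemma one_le_jb (x : ℝ) : 1 ≤ jb x := by
  unfold jb
  rw [Real.one_le_sqrt]
  nlinarith [sq_nonneg x]

lemma jb_pos (x : ℝ) : 0 < jb x := lt_of_lt_of_le one_pos (one_le_jb x)

lemma jb_sq (x : ℝ) : jb x ^ 2 = 1 + x ^ 2 := Real.sq_sqrt (by positivity)

lemma jb_abs (x : ℝ) : jb |x| = jb x := by simp [jb]

lemma abs_le_jb (x : ℝ) : |x| ≤ jb x := by
  apply Real.le_sqrt_of_sq_le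
  rw [sq_abs]; linarith

lemma jb_sub (x y : ℝ) : jb (x - y) ≤ jb x + jb y := by
  have h1 := jb_sq x
  have h2 := jb_sq y
  have h3 := jb_sq (x - y)
  have h4 := abs_le_jb x
  have h5 := abs_le_jb y
  have h6 := jb_pos x
  have h7 := jb_pos y
  apply le_of_sq_le_sq _ (by positivity)
  have h8 : |x| * |y| ≤ jb x * jb y := by gcongr
  have h9 : -(x * y) ≤ |x| * |y| := by rw [← abs_mul]; exact neg_le_abs _
  nlinarith

lemma continuous_jb : Continuous jb := by unfold jb; fun_prop

noncomputable def gK (β γ K x : ℝ) : ℝ := jb x ^ (-β) * (max (jb x) (K / 2)) ^ (-γ)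

lemma integrable_jb {r : ℝ} (hr : 1 < r) : Integrable (fun x => jb x ^ (-r)) := by
  have := integrable_rpow_neg_one_add_norm_sq (E := ℝ) (μ := volume) (r := r) (by simpa using hr)
  refine this.congr (Filter.Eventually.of_forall fun x => ?_)
  simp only [jb, Real.norm_eq_abs, sq_abs]
  rw [Real.sqrt_eq_rpow, ← Real.rpow_mul (by positivity)]
  congr 1; ring

lemma continuous_gK (β γ K : ℝ) : Continuous (gK β γ K) := by
  unfold gK
  refine Continuous.mul (continuous_jb.rpow_const fun x => Or.inl (jb_pos x).ne') ?_
  exact (continuous_jb.max continuous_const).rpow_const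
    fun x => Or.inl (lt_max_of_lt_left (jb_pos x)).ne'

lemma gK_nonneg (β γ K x : ℝ) : 0 ≤ gK β γ K x := by
  have := jb_pos x
  have : 0 < max (jb x) (K / 2) := lt_max_of_lt_left this
  unfold gK; positivity

lemma gK_le1 {β γ : ℝ} (hγ : 0 ≤ γ) (K x : ℝ) : gK β γ K x ≤ jb x ^ (-(β + γ)) := by
  have h := jb_pos x
  rw [neg_add, Real.rpow_add h]
  unfold gK
  refine mul_le_mul_of_nonneg_left ?_ (by positivity)
  exact Real.rpow_le_rpow_of_nonpos h (le_max_left _ _) (by linarith)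

lemma gK_le2 {β γ : ℝ} (hγ : 0 ≤ γ) {K : ℝ} (hK : 0 < K) (x : ℝ) :
    gK β γ K x ≤ jb x ^ (-β) * (K / 2) ^ (-γ) := by
  have h := jb_pos x
  unfold gK
  refine mul_le_mul_of_nonneg_left ?_ (by positivity)
  exact Real.rpow_le_rpow_of_nonpos (by positivity) (le_max_right _ _) (by linarith)

lemma integrable_gK {β γ : ℝ} (hγ : 0 ≤ γ) (hsum : 1 < β + γ) (K : ℝ) :
    Integrable (gK β γ K) := by
  refine (integrable_jb hsum).mono' (continuous_gK β γ K).aestronglyMeasurable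
    (Filter.Eventually.of_forall fun x => ?_)
  rw [Real.norm_of_nonneg (gK_nonneg _ _ _ _)]
  exact gK_le1 hγ K x

lemma half_rpow {K γ : ℝ} (hK : 0 < K) : (K / 2) ^ (-γ) = 2 ^ γ * K ^ (-γ) := by
  rw [Real.div_rpow hK.le (by norm_num), Real.rpow_neg (by norm_num : (0:ℝ) ≤ 2)]
  field_simp

lemma tail_bound {β γ : ℝ} (hγ : 0 ≤ γ) (hsum : 1 < β + γ) {K : ℝ} (hK : 1 ≤ K) :
    ∫ x in Set.Ioi K, gK β γ K x ≤ 1 / (β + γ - 1) * (K ^ (-γ) * K ^ (1 - β)) := by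
  have hK0 : 0 < K := by linarith
  have h1 : ∫ x in Set.Ioi K, gK β γ K x ≤ ∫ x in Set.Ioi K, x ^ (-(β + γ)) := by
    refine setIntegral_mono_on (integrable_gK hγ hsum K).integrableOn
      (integrableOn_Ioi_rpow_of_lt (by linarith) hK0) measurableSet_Ioi fun x hx => ?_
    have hx0 : 0 < x := hK0.trans hx
    refine (gK_le1 hγ K x).trans ?_
    exact Real.rpow_le_rpow_of_nonpos hx0 ((le_abs_self x).trans (abs_le_jb x)) (by linarith)
  refine h1.trans (le_of_eq ?_)
  rw [integral_Ioi_rpow_of_lt (by linarith) hK0, ← Real.rpow_add hK0]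
  have e : -γ + (1 - β) = -(β + γ) + 1 := by ring
  rw [e]
  have : -(β + γ) + 1 ≠ 0 := by linarith
  have : β + γ - 1 ≠ 0 := by linarith
  rw [show -(β + γ) + 1 = -(β + γ - 1) by ring]
  field_simp

lemma head_bound {β γ : ℝ} (hβ : 0 ≤ β) (hγ : 0 ≤ γ) (hsum : 1 < β + γ) {K : ℝ} (hK : 1 ≤ K) :
    ∫ x in Set.Ioc 0 K, gK β γ K x ≤
      2 ^ β * 2 ^ γ * (K ^ (-γ) * ∫ x in (1:ℝ)..(1 + K), x ^ (-β)) := by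
  have hK0 : 0 < K := by linarith
  have hc : ContinuousOn (fun x : ℝ => 2 ^ β * (2 ^ γ * K ^ (-γ)) * (1 + x) ^ (-β))
      (Set.Icc 0 K) := by
    refine continuousOn_const.mul (ContinuousOn.rpow_const (by fun_prop) fun x hx => Or.inl ?_)
    have := hx.1
    positivity
  have h1 : ∫ x in Set.Ioc 0 K, gK β γ K x ≤
      ∫ x in Set.Ioc 0 K, 2 ^ β * (2 ^ γ * K ^ (-γ)) * (1 + x) ^ (-β) := by
    refine setIntegral_mono_on (integrable_gK hγ hsum K).integrableOn
      ((hc.integrableOn_Icc).mono_set Set.Ioc_subset_Icc_self) measurableSet_Ioc fun x hx => ?_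
    have hx0 : 0 < x := hx.1
    refine (gK_le2 hγ hK0 x).trans ?_
    rw [half_rpow hK0]
    have h2 : jb x ^ (-β) ≤ ((1 + x) / 2) ^ (-β) := by
      refine Real.rpow_le_rpow_of_nonpos (by positivity) ?_ (by linarith)
      have := one_le_jb x
      have := (le_abs_self x).trans (abs_le_jb x)
      linarith
    rw [half_rpow (by positivity)] at h2
    calc _ ≤ (2 ^ β * (1 + x) ^ (-β)) * (2 ^ γ * K ^ (-γ)) := by gcongr
      _ = _ := by ring
  refine h1.trans (le_of_eq ?_)
  rw [← intervalIntegral.integral_of_le hK0.le, intervalIntegral.integral_const_mul,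
    intervalIntegral.integral_comp_add_left (fun x : ℝ => x ^ (-β)) 1]
  simp only [add_zero]
  ring

lemma split_gK {β γ : ℝ} (hγ : 0 ≤ γ) (hsum : 1 < β + γ) {K : ℝ} (hK : 1 ≤ K) :
    ∫ x, gK β γ K x = 2 * ((∫ x in Set.Ioc 0 K, gK β γ K x) + ∫ x in Set.Ioi K, gK β γ K x) := by
  have e : ∀ x, gK β γ K x = gK β γ K |x| := fun x => by simp only [gK, jb_abs]
  have hi := integrable_gK hγ hsum K
  rw [← setIntegral_union (Set.Ioc_disjoint_Ioi le_rfl) measurableSet_Ioi hi.integrableOn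
    hi.integrableOn, Set.Ioc_union_Ioi_eq_Ioi (by linarith), ← integral_comp_abs]
  exact integral_congr_ae (Filter.Eventually.of_forall e)

noncomputable def PhiK (β K : ℝ) : ℝ :=
  if 1 < β then 1 else if β = 1 then Real.log (1 + K) else K ^ (1 - β)

lemma key {β γ : ℝ} (hγ : 0 ≤ γ) (hβγ : γ ≤ β) (hsum : 1 < β + γ) :
    ∃ C > 0, ∀ K : ℝ, 1 ≤ K → ∫ x, gK β γ K x ≤ C * K ^ (-γ) * PhiK β K := by
  have hβ : 0 < β := by linarith
  have hs : 0 < β + γ - 1 := by linarith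
  rcases lt_trichotomy β 1 with h | h | h
  · have hb : 0 < 1 - β := by linarith
    refine ⟨2 * (2 ^ β * 2 ^ γ * (2 ^ (1 - β) / (1 - β)) + 1 / (β + γ - 1)), by positivity,
      fun K hK => ?_⟩
    have hK0 : 0 < K := by linarith
    rw [split_gK hγ hsum hK, PhiK, if_neg (by linarith), if_neg h.ne]
    have h1 := tail_bound hγ hsum hK
    have h2 := head_bound hβ.le hγ hsum hK
    have h3 : ∫ x in (1:ℝ)..(1 + K), x ^ (-β) ≤ 2 ^ (1 - β) / (1 - β) * K ^ (1 - β) := by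
      rw [integral_rpow (Or.inl (by linarith)), div_mul_eq_mul_div,
        ← Real.mul_rpow (by norm_num) hK0.le, show -β + 1 = 1 - β by ring]
      gcongr
      have : (1 + K) ^ (1 - β) ≤ (2 * K) ^ (1 - β) :=
        Real.rpow_le_rpow (by positivity) (by linarith) hb.le
      rw [Real.one_rpow]; linarith
    have h4 : 2 ^ β * 2 ^ γ * (K ^ (-γ) * ∫ x in (1:ℝ)..(1 + K), x ^ (-β)) ≤
      2 ^ β * 2 ^ γ * (K ^ (-γ) * (2 ^ (1 - β) / (1 - β) * K ^ (1 - β))) := by gcongr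
    linarith
  · subst h
    have hl : 0 < Real.log 2 := Real.log_pos (by norm_num)
    refine ⟨2 * (2 ^ (1:ℝ) * 2 ^ γ + 1 / (1 + γ - 1) * (1 / Real.log 2)), by positivity,
      fun K hK => ?_⟩
    have hK0 : 0 < K := by linarith
    rw [split_gK hγ hsum hK, PhiK, if_neg (by linarith), if_pos rfl]
    have h1 := tail_bound hγ hsum hK
    have h2 := head_bound hβ.le hγ hsum hK
    have h3 : ∫ x in (1:ℝ)..(1 + K), x ^ (-(1:ℝ)) = Real.log (1 + K) := by
      simp only [Real.rpow_neg_one]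
      rw [integral_inv_of_pos one_pos (by positivity), div_one]
    rw [h3] at h2
    rw [sub_self, Real.rpow_zero] at h1
    have h5 : 1 ≤ 1 / Real.log 2 * Real.log (1 + K) := by
      rw [one_div, inv_mul_eq_div, one_le_div hl]
      exact Real.log_le_log (by norm_num) (by linarith)
    have h4 : 1 / (1 + γ - 1) * (K ^ (-γ) * 1) ≤
      1 / (1 + γ - 1) * (K ^ (-γ) * (1 / Real.log 2 * Real.log (1 + K))) := by gcongr
    linarith
  · have hn : 0 ≤ ∫ x, jb x ^ (-β) :=
      integral_nonneg fun x => Real.rpow_nonneg (jb_pos x).le _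
    refine ⟨2 ^ γ * ((∫ x, jb x ^ (-β)) + 1), by positivity, fun K hK => ?_⟩
    have hK0 : 0 < K := by linarith
    rw [PhiK, if_pos h]
    have h1 : ∫ x, gK β γ K x ≤ ∫ x, jb x ^ (-β) * (K / 2) ^ (-γ) :=
      integral_mono (integrable_gK hγ hsum K) ((integrable_jb h).mul_const _)
        fun x => gK_le2 hγ hK0 x
    rw [integral_mul_const, half_rpow hK0] at h1
    have : 0 ≤ 2 ^ γ * K ^ (-γ) := by positivity
    nlinarith

lemma aux_le {β γ A B K : ℝ} (hγ : 0 ≤ γ) (hA : 0 < A) (hAB : A ≤ B) (hK : K ≤ A + B) :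
    A ^ (-β) * B ^ (-γ) ≤ A ^ (-β) * (max A (K / 2)) ^ (-γ) := by
  refine mul_le_mul_of_nonneg_left ?_ (by positivity)
  exact Real.rpow_le_rpow_of_nonpos (lt_max_of_lt_left hA) (max_le hAB (by linarith)) (by linarith)

lemma swap_le {β γ A B : ℝ} (hβγ : γ ≤ β) (hB : 0 < B) (hAB : B ≤ A) :
    A ^ (-β) * B ^ (-γ) ≤ B ^ (-β) * A ^ (-γ) := by
  have hA : 0 < A := hB.trans_le hAB
  have e : ∀ x : ℝ, 0 < x → x ^ (-β) = x ^ (-γ) * x ^ (γ - β) := fun x hx => by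
    rw [← Real.rpow_add hx]; congr 1; ring
  rw [e A hA, e B hB]
  have : A ^ (γ - β) ≤ B ^ (γ - β) := Real.rpow_le_rpow_of_nonpos hB hAB (by linarith)
  calc _ = A ^ (-γ) * B ^ (-γ) * A ^ (γ - β) := by ring
    _ ≤ A ^ (-γ) * B ^ (-γ) * B ^ (γ - β) := by gcongr
    _ = _ := by ring

theorem stmt0 (β γ : ℝ) (hγ : 0 ≤ γ) (hβγ : γ ≤ β) (hsum : 1 < β + γ) :
    ∃ C > 0, ∀ k₁ k₂ : ℝ,
      (∫ τ : ℝ, (jb (τ - k₁)) ^ (-β) * (jb (τ - k₂)) ^ (-γ)) ≤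
        C * (jb (k₁ - k₂)) ^ (-γ) * phi β (k₁ - k₂) := by
  obtain ⟨C, hC, h⟩ := key hγ hβγ hsum
  refine ⟨2 * C, by positivity, fun k₁ k₂ => ?_⟩
  have hk := h _ (one_le_jb (k₁ - k₂))
  have hphi : PhiK β (jb (k₁ - k₂)) = phi β (k₁ - k₂) := rfl
  rw [hphi] at hk
  set K := jb (k₁ - k₂) with hKdef
  have hi := integrable_gK (β := β) hγ hsum K
  have hle : ∫ τ : ℝ, (jb (τ - k₁)) ^ (-β) * (jb (τ - k₂)) ^ (-γ) ≤
      ∫ τ : ℝ, (gK β γ K (τ - k₁) + gK β γ K (τ - k₂)) := by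
    refine integral_mono_of_nonneg (Filter.Eventually.of_forall fun τ => ?_)
      ((hi.comp_sub_right k₁).add (hi.comp_sub_right k₂))
      (Filter.Eventually.of_forall fun τ => ?_)
    · exact mul_nonneg (Real.rpow_nonneg (jb_pos _).le _) (Real.rpow_nonneg (jb_pos _).le _)
    · have hA := jb_pos (τ - k₁)
      have hB := jb_pos (τ - k₂)
      have hK : K ≤ jb (τ - k₂) + jb (τ - k₁) := by
        have := jb_sub (τ - k₂) (τ - k₁)
        rwa [show τ - k₂ - (τ - k₁) = k₁ - k₂ by ring] at this
      have n1 := gK_nonneg β γ K (τ - k₁)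
      have n2 := gK_nonneg β γ K (τ - k₂)
      rcases le_total (jb (τ - k₁)) (jb (τ - k₂)) with hc | hc
      · have := aux_le (β := β) hγ hA hc (by linarith : K ≤ _)
        simp only [gK] at *
        linarith
      · have h1 := swap_le hβγ hB hc
        have h2 := aux_le (β := β) hγ hB hc hK
        simp only [gK] at *
        linarith
  rw [integral_add (hi.comp_sub_right k₁) (hi.comp_sub_right k₂),
    integral_sub_right_eq_self (gK β γ K) k₁, integral_sub_right_eq_self (gK β γ K) k₂] at hle
  linarith
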